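/- In the setting below, assume in addition 3/7 < p < 1. Then for every M > 0 there exists a constant C₀ > 0, depending only on p, c₁, c₂, C_U, u₋, u₊, f and M (and not on T), such that whenever ‖φ(0,·)‖_{L²} + ‖∂ₓφ(0,·)‖_{L²} + ‖∂ₓ²φ(0,·)‖_{L²} + sup_{x∈ℝ}|φ(0,x)| ≤ M, one has sup_{(t,x)∈[0,T]×ℝ} |∂ₓφ(t,x)| ≤ C₀. -/

import Mathlib

open MeasureTheory Filter Set intervalIntegral

/-- `L²` norm in the space variable. -/
noncomputable def L2norm (g : ℝ → ℝ) : ℝ := (∫ x : ℝ, (g x) ^ 2) ^ ((1 : ℝ) / 2)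

/-!
The sum `u = U + φ` solves the viscous conservation law `∂ₜu = ∂ₓF` with flux `F = σ(∂ₓu) - f(u)`.
Differentiating the flux in time and using `∂ₜ∂ₓu = ∂ₓ²F` gives
`∂ₜF = σ'(∂ₓu) ∂ₓ²F - f'(u) ∂ₓF`: the flux solves the same linear parabolic equation as `u` itself,
without zeroth-order term. The maximum principle therefore bounds `u`, and then `F`, by their
initial values, hence also `σ(∂ₓu) = F + f(u)`. This bounds `∂ₓu` since `σ` dominates a primitive of
the lower bound for `σ'`, and for `p ≥ 0` the power-law primitive grows at least like `arsinh`.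
-/

section Calculus

theorem deriv_deriv_nonpos_of_isLocalMax {g : ℝ → ℝ} {x : ℝ} (hg : ContinuousAt g x)
    (hmax : IsLocalMax g x) : deriv (deriv g) x ≤ 0 := by
  by_contra! hpos
  have hmin : IsLocalMin g x := isLocalMin_of_deriv_deriv_pos hpos hmax.deriv_eq_zero hg
  have hconst : g =ᶠ[nhds x] fun _ => g x := hmax.and hmin |>.mono fun _ h => h.1.antisymm h.2
  have hzero : deriv (deriv g) x = 0 := by simpa using hconst.deriv.deriv_eq
  exact hpos.ne' hzero

theorem deriv_nonneg_of_isMaxOn_Icc {g : ℝ → ℝ} {a b : ℝ} (hab : a < b)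
    (hmax : IsMaxOn g (Icc a b) b) : 0 ≤ deriv g b := by
  by_cases hg : DifferentiableAt ℝ g b
  · have hleft : a - b ∈ posTangentConeAt (Icc a b) b :=
      sub_mem_posTangentConeAt_of_segment_subset
        (by rw [segment_symm, segment_eq_Icc hab.le])
    have hslope := hmax.localize.hasFDerivWithinAt_nonpos
      hg.hasDerivAt.hasFDerivAt.hasFDerivWithinAt hleft
    refine nonneg_of_mul_nonpos_right ?_ (sub_neg.2 hab)
    simpa using hslope
  · exact (deriv_zero_of_not_differentiableAt hg).ge

theorem abs_sub_le_abs_sub_of_deriv_le {g h : ℝ → ℝ} (hg : Differentiable ℝ g)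
    (hh : Differentiable ℝ h) (hnonneg : ∀ v, 0 ≤ deriv g v)
    (hle : ∀ v, deriv g v ≤ deriv h v) (a v : ℝ) : |g v - g a| ≤ |h v - h a| := by
  have hg_mono : Monotone g := monotone_of_deriv_nonneg hg hnonneg
  have hsub_mono : Monotone (h - g) := monotone_of_deriv_nonneg (hh.sub hg) fun v => by
    rw [deriv_sub (hh v) (hg v)]
    exact sub_nonneg.2 (hle v)
  rcases le_total a v with hav | hva
  · have hsub : h a - g a ≤ h v - g v := hsub_mono hav
    rw [abs_of_nonneg (sub_nonneg.2 (hg_mono hav))]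
    exact (by linarith : g v - g a ≤ h v - h a).trans (le_abs_self _)
  · have hsub : h v - g v ≤ h a - g a := hsub_mono hva
    rw [abs_of_nonpos (sub_nonpos.2 (hg_mono hva))]
    exact (by linarith : -(g v - g a) ≤ -(h v - h a)).trans (neg_le_abs _)

theorem exists_forall_abs_le_of_continuous {g : ℝ → ℝ} (hg : Continuous g) (R : ℝ) :
    ∃ K, ∀ z, |z| ≤ R → |g z| ≤ K := by
  obtain ⟨K, hK⟩ := (isCompact_Icc (a := -R) (b := R)).exists_bound_of_continuousOn hg.continuousOn
  exact ⟨K, fun z hz => hK z (abs_le.1 hz)⟩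

end Calculus

section PartialDerivatives

open Function

variable {E : Type*} [NormedAddCommGroup E] [NormedSpace ℝ E] {u : ℝ → ℝ → E} {t x : ℝ}

theorem hasDerivAt_fst_of_differentiableAt_uncurry
    (hu : DifferentiableAt ℝ (uncurry u) (t, x)) :
    HasDerivAt (fun s => u s x) (fderiv ℝ (uncurry u) (t, x) (1, 0)) t :=
  hu.hasFDerivAt.comp_hasDerivAt (f := fun s => (s, x)) t
    ((hasDerivAt_id t).prodMk (hasDerivAt_const t x))

theorem hasDerivAt_snd_of_differentiableAt_uncurry
    (hu : DifferentiableAt ℝ (uncurry u) (t, x)) :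
    HasDerivAt (u t) (fderiv ℝ (uncurry u) (t, x) (0, 1)) x :=
  hu.hasFDerivAt.comp_hasDerivAt (f := fun y => (t, y)) x
    ((hasDerivAt_const x t).prodMk (hasDerivAt_id x))

theorem differentiable_fst_of_differentiable_uncurry (hu : Differentiable ℝ (uncurry u)) (x : ℝ) :
    Differentiable ℝ fun t => u t x :=
  fun t => (hasDerivAt_fst_of_differentiableAt_uncurry (hu (t, x))).differentiableAt

theorem differentiable_snd_of_differentiable_uncurry (hu : Differentiable ℝ (uncurry u)) (t : ℝ) :
    Differentiable ℝ (u t) :=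
  fun x => (hasDerivAt_snd_of_differentiableAt_uncurry (hu (t, x))).differentiableAt

theorem contDiff_uncurry_deriv_fst {m n : WithTop ℕ∞} (hu : ContDiff ℝ n (uncurry u))
    (hmn : m + 1 ≤ n) : ContDiff ℝ m (uncurry fun t x => deriv (fun s => u s x) t) := by
  have hdiff : Differentiable ℝ (uncurry u) :=
    hu.differentiable (one_pos.trans_le (le_add_self.trans hmn)).ne'
  have hpartial : uncurry (fun t x => deriv (fun s => u s x) t) =
      fun q => fderiv ℝ (uncurry u) q (1, 0) :=
    funext fun q => (hasDerivAt_fst_of_differentiableAt_uncurry (hdiff q)).deriv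
  rw [hpartial]
  exact (hu.fderiv_right hmn).clm_apply contDiff_const

theorem contDiff_uncurry_deriv_snd {m n : WithTop ℕ∞} (hu : ContDiff ℝ n (uncurry u))
    (hmn : m + 1 ≤ n) : ContDiff ℝ m (uncurry fun t x => deriv (u t) x) := by
  have hdiff : Differentiable ℝ (uncurry u) :=
    hu.differentiable (one_pos.trans_le (le_add_self.trans hmn)).ne'
  have hpartial : uncurry (fun t x => deriv (u t) x) =
      fun q => fderiv ℝ (uncurry u) q (0, 1) :=
    funext fun q => (hasDerivAt_snd_of_differentiableAt_uncurry (hdiff q)).deriv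
  rw [hpartial]
  exact (hu.fderiv_right hmn).clm_apply contDiff_const

theorem deriv_fst_deriv_snd_comm (hu : ContDiff ℝ 2 (uncurry u)) (t x : ℝ) :
    deriv (fun s => deriv (u s) x) t = deriv (fun y => deriv (fun s => u s y) t) x := by
  have hdiff : Differentiable ℝ (uncurry u) := hu.differentiable two_ne_zero
  have hfderiv : Differentiable ℝ (fderiv ℝ (uncurry u)) :=
    (hu.fderiv_right one_add_one_eq_two.le).differentiable one_ne_zero
  have happly (w : ℝ × ℝ) : HasFDerivAt (fun q => fderiv ℝ (uncurry u) q w)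
      ((fderiv ℝ (fderiv ℝ (uncurry u)) (t, x)).flip w) (t, x) := by
    simpa using (hfderiv (t, x)).hasFDerivAt.clm_apply (hasFDerivAt_const w (t, x))
  have hsymm : IsSymmSndFDerivAt ℝ (uncurry u) (t, x) :=
    hu.contDiffAt.isSymmSndFDerivAt (by simp)
  have htime : HasDerivAt (fun s => fderiv ℝ (uncurry u) (s, x) (0, 1))
      (fderiv ℝ (fderiv ℝ (uncurry u)) (t, x) (1, 0) (0, 1)) t :=
    (happly (0, 1)).comp_hasDerivAt (f := fun s => (s, x)) t
      ((hasDerivAt_id t).prodMk (hasDerivAt_const t x))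
  have hspace : HasDerivAt (fun y => fderiv ℝ (uncurry u) (t, y) (1, 0))
      (fderiv ℝ (fderiv ℝ (uncurry u)) (t, x) (0, 1) (1, 0)) x :=
    (happly (1, 0)).comp_hasDerivAt (f := fun y => (t, y)) x
      ((hasDerivAt_const x t).prodMk (hasDerivAt_id x))
  simp only [fun s => (hasDerivAt_snd_of_differentiableAt_uncurry (hdiff (s, x))).deriv,
    fun y => (hasDerivAt_fst_of_differentiableAt_uncurry (hdiff (t, y))).deriv]
  rw [htime.deriv, hspace.deriv, hsymm (1, 0) (0, 1)]

end PartialDerivatives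

section MaximumPrinciple

open Function

variable {G H W a b : ℝ → ℝ → ℝ} {T t x : ℝ}

theorem exists_isMaxOn_strip {R : ℝ} (hW : ContinuousOn (uncurry W) (Icc 0 T ×ˢ univ))
    (hfar : ∀ t ∈ Icc 0 T, ∀ x, R < |x| → W t x ≤ 0) (ht : t ∈ Icc 0 T) (hpos : 0 < W t x) :
    ∃ q ∈ Icc 0 T ×ˢ univ, IsMaxOn (uncurry W) (Icc 0 T ×ˢ univ) q := by
  have hcompact : IsCompact (Icc 0 T ×ˢ Icc (-R) R) := isCompact_Icc.prod isCompact_Icc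
  refine hW.exists_isMaxOn' (isClosed_Icc.prod isClosed_univ) (x₀ := (t, x)) ⟨ht, mem_univ x⟩ ?_
  filter_upwards [mem_inf_of_left hcompact.compl_mem_cocompact,
    mem_inf_of_right (mem_principal_self (Icc 0 T ×ˢ (univ : Set ℝ)))] with q hq hstrip
  have hRq : R < |q.2| := by
    by_contra! hle
    exact hq ⟨hstrip.1, abs_le.1 hle⟩
  exact (hfar q.1 hstrip.1 q.2 hRq).trans hpos.le

theorem derivatives_of_isMaxOn_strip (hW : ContinuousAt (W t) x) (ht : t ∈ Ioc 0 T)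
    (hmax : IsMaxOn (uncurry W) (Icc 0 T ×ˢ univ) (t, x)) :
    0 ≤ deriv (fun s => W s x) t ∧ deriv (W t) x = 0 ∧ deriv (deriv (W t)) x ≤ 0 := by
  have hle {s y : ℝ} (hs : s ∈ Icc 0 T) : W s y ≤ W t x :=
    hmax (show (s, y) ∈ Icc 0 T ×ˢ univ from ⟨hs, mem_univ y⟩)
  have hspace : IsLocalMax (W t) x := Eventually.of_forall fun y => hle (Ioc_subset_Icc_self ht)
  have htime : IsMaxOn (fun s => W s x) (Icc 0 t) t := fun s hs => hle ⟨hs.1, hs.2.trans ht.2⟩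
  exact ⟨deriv_nonneg_of_isMaxOn_Icc ht.1 htime, hspace.deriv_eq_zero,
    deriv_deriv_nonpos_of_isLocalMax hW hspace⟩

theorem derivatives_le_of_isMaxOn_strip_sub (hG : Differentiable ℝ (uncurry G))
    (hH : Differentiable ℝ (uncurry H)) (hGx : DifferentiableAt ℝ (deriv (G t)) x)
    (hHx : DifferentiableAt ℝ (deriv (H t)) x) (ht : t ∈ Ioc 0 T)
    (hmax : IsMaxOn (uncurry fun t x => G t x - H t x) (Icc 0 T ×ˢ univ) (t, x)) :
    deriv (fun s => H s x) t ≤ deriv (fun s => G s x) t ∧ deriv (G t) x = deriv (H t) x ∧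
      deriv (deriv (G t)) x ≤ deriv (deriv (H t)) x := by
  have hG_snd := differentiable_snd_of_differentiable_uncurry hG t
  have hH_snd := differentiable_snd_of_differentiable_uncurry hH t
  have hderiv : deriv (fun y => G t y - H t y) = fun y => deriv (G t) y - deriv (H t) y :=
    funext fun y => deriv_fun_sub (hG_snd y) (hH_snd y)
  obtain ⟨hWt, hWx, hWxx⟩ := derivatives_of_isMaxOn_strip
    (hG_snd.sub hH_snd).continuous.continuousAt ht hmax
  rw [deriv_fun_sub (differentiable_fst_of_differentiable_uncurry hG x t)
    (differentiable_fst_of_differentiable_uncurry hH x t)] at hWt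
  rw [hderiv] at hWx
  rw [hderiv, deriv_fun_sub hGx hHx] at hWxx
  exact ⟨sub_nonneg.1 hWt, sub_eq_zero.1 hWx, sub_nonpos.1 hWxx⟩

theorem le_of_subsolution_of_strict_supersolution {R : ℝ} (hG : Differentiable ℝ (uncurry G))
    (hH : Differentiable ℝ (uncurry H)) (hGx : ∀ t ∈ Ioc 0 T, Differentiable ℝ (deriv (G t)))
    (hHx : ∀ t ∈ Ioc 0 T, Differentiable ℝ (deriv (H t)))
    (ha : ∀ t ∈ Ioc 0 T, ∀ x, 0 ≤ a t x)
    (hsub : ∀ t ∈ Ioc 0 T, ∀ x, deriv (fun s => G s x) t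
      ≤ a t x * deriv (deriv (G t)) x + b t x * deriv (G t) x)
    (hsuper : ∀ t ∈ Ioc 0 T, ∀ x, a t x * deriv (deriv (H t)) x + b t x * deriv (H t) x
      < deriv (fun s => H s x) t)
    (h0 : ∀ x, G 0 x ≤ H 0 x) (hfar : ∀ t ∈ Icc 0 T, ∀ x, R < |x| → G t x ≤ H t x)
    (ht : t ∈ Icc 0 T) : G t x ≤ H t x := by
  by_contra! hlt
  obtain ⟨⟨t₀, x₀⟩, ⟨ht₀, -⟩, hmax⟩ := exists_isMaxOn_strip
    (W := fun t x => G t x - H t x) (hG.sub hH).continuous.continuousOn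
    (fun s hs y hy => sub_nonpos.2 (hfar s hs y hy)) ht (sub_pos.2 hlt)
  have hpos : 0 < G t₀ x₀ - H t₀ x₀ :=
    (sub_pos.2 hlt).trans_le (hmax (show (t, x) ∈ Icc 0 T ×ˢ univ from ⟨ht, mem_univ x⟩))
  have ht₀_ne : t₀ ≠ 0 := by
    rintro rfl
    exact absurd (h0 x₀) (sub_pos.1 hpos).not_ge
  have ht₀' : t₀ ∈ Ioc 0 T := ⟨ht₀.1.lt_of_ne' ht₀_ne, ht₀.2⟩
  obtain ⟨htime, hspace, hspace₂⟩ := derivatives_le_of_isMaxOn_strip_sub hG hH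
    (hGx t₀ ht₀' x₀) (hHx t₀ ht₀' x₀) ht₀' hmax
  refine lt_irrefl (deriv (fun s => H s x₀) t₀) ?_
  calc deriv (fun s => H s x₀) t₀
      ≤ deriv (fun s => G s x₀) t₀ := htime
    _ ≤ a t₀ x₀ * deriv (deriv (G t₀)) x₀ + b t₀ x₀ * deriv (G t₀) x₀ := hsub t₀ ht₀' x₀
    _ ≤ a t₀ x₀ * deriv (deriv (H t₀)) x₀ + b t₀ x₀ * deriv (H t₀) x₀ := by
      rw [hspace]
      gcongr
      exact ha t₀ ht₀' x₀
    _ < deriv (fun s => H s x₀) t₀ := hsuper t₀ ht₀' x₀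

/-- The function `m + ε e^{Kt} (1 + x²)`, which for `K > 4A` is a strict supersolution of every
parabolic equation `∂ₜG = a ∂ₓ²G + b ∂ₓG` with `a` and `b x` at most `A (1 + x²)`; it dominates
bounded functions outside a compact set. -/
noncomputable def quadraticBarrier (m ε K t x : ℝ) : ℝ := m + ε * Real.exp (K * t) * (1 + x ^ 2)

section Barrier

variable (m ε K : ℝ)

theorem contDiff_uncurry_quadraticBarrier {n : WithTop ℕ∞} :
    ContDiff ℝ n (uncurry (quadraticBarrier m ε K)) := by
  unfold quadraticBarrier uncurry
  fun_prop

theorem deriv_quadraticBarrier_time (t x : ℝ) :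
    deriv (fun s => quadraticBarrier m ε K s x) t = ε * Real.exp (K * t) * (K * (1 + x ^ 2)) := by
  have hexp : HasDerivAt (fun s => Real.exp (K * s)) (Real.exp (K * t) * K) t := by
    simpa using ((hasDerivAt_id t).const_mul K).exp
  unfold quadraticBarrier
  rw [(((hexp.const_mul ε).mul_const (1 + x ^ 2)).const_add m).deriv]
  ring

theorem deriv_quadraticBarrier_space (t : ℝ) :
    deriv (quadraticBarrier m ε K t) = fun x => ε * Real.exp (K * t) * (2 * x) := by
  funext x
  unfold quadraticBarrier
  simp

theorem deriv_deriv_quadraticBarrier_space (t x : ℝ) :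
    deriv (deriv (quadraticBarrier m ε K t)) x = ε * Real.exp (K * t) * 2 := by
  rw [deriv_quadraticBarrier_space]
  simp

variable {m ε K}

theorem quadraticBarrier_strict_supersolution {A α β : ℝ} (hε : 0 < ε) (hK : 4 * A < K)
    (hα : α ≤ A * (1 + x ^ 2)) (hβ : β * x ≤ A * (1 + x ^ 2)) :
    α * deriv (deriv (quadraticBarrier m ε K t)) x + β * deriv (quadraticBarrier m ε K t) x
      < deriv (fun s => quadraticBarrier m ε K s x) t := by
  have hcoeff : 2 * α + 2 * (β * x) < K * (1 + x ^ 2) :=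
    calc 2 * α + 2 * (β * x) ≤ 4 * A * (1 + x ^ 2) := by linarith
      _ < K * (1 + x ^ 2) := by gcongr
  have hscale : 0 < ε * Real.exp (K * t) := by positivity
  rw [deriv_deriv_quadraticBarrier_space, deriv_quadraticBarrier_space,
    deriv_quadraticBarrier_time]
  calc α * (ε * Real.exp (K * t) * 2) + β * (ε * Real.exp (K * t) * (2 * x))
      = ε * Real.exp (K * t) * (2 * α + 2 * (β * x)) := by ring
    _ < ε * Real.exp (K * t) * (K * (1 + x ^ 2)) := mul_lt_mul_of_pos_left hcoeff hscale

theorem le_quadraticBarrier_of_lt_abs {B : ℝ} (hε : 0 < ε) (hK : 0 ≤ K) (ht : 0 ≤ t)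
    (hx : 1 + |B - m| / ε < |x|) : B ≤ quadraticBarrier m ε K t x := by
  have hone : 1 ≤ Real.exp (K * t) := Real.one_le_exp (mul_nonneg hK ht)
  have hdiv : 0 ≤ |B - m| / ε := by positivity
  have hsq : |B - m| / ε ≤ 1 + x ^ 2 := by
    rw [← sq_abs x]
    nlinarith
  have hgap : B - m ≤ ε * Real.exp (K * t) * (1 + x ^ 2) :=
    calc B - m ≤ |B - m| := le_abs_self _
      _ = ε * 1 * (|B - m| / ε) := by field_simp
      _ ≤ ε * Real.exp (K * t) * (1 + x ^ 2) := by gcongr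
  unfold quadraticBarrier
  linarith

end Barrier

theorem le_of_parabolic_subsolution {A B m : ℝ} (hG : Differentiable ℝ (uncurry G))
    (hGx : ∀ t ∈ Ioc 0 T, Differentiable ℝ (deriv (G t)))
    (hbdd : ∀ t ∈ Icc 0 T, ∀ x, G t x ≤ B) (ha₀ : ∀ t ∈ Ioc 0 T, ∀ x, 0 ≤ a t x)
    (ha : ∀ t ∈ Ioc 0 T, ∀ x, a t x ≤ A * (1 + x ^ 2))
    (hb : ∀ t ∈ Ioc 0 T, ∀ x, b t x * x ≤ A * (1 + x ^ 2))
    (hsub : ∀ t ∈ Ioc 0 T, ∀ x, deriv (fun s => G s x) t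
      ≤ a t x * deriv (deriv (G t)) x + b t x * deriv (G t) x)
    (h0 : ∀ x, G 0 x ≤ m) (ht : t ∈ Icc 0 T) : G t x ≤ m := by
  set K : ℝ := 4 * |A| + 1
  have hK : 4 * A < K := by linarith [le_abs_self A]
  have hbarrier (ε : ℝ) (hε : 0 < ε) : G t x ≤ quadraticBarrier m ε K t x := by
    have hbarrier_smooth := contDiff_uncurry_quadraticBarrier m ε K (n := 1)
    refine le_of_subsolution_of_strict_supersolution (R := 1 + |B - m| / ε) hG
      (hbarrier_smooth.differentiable one_ne_zero) hGx (fun s _ => ?_) ha₀ hsub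
      (fun s hs y => quadraticBarrier_strict_supersolution hε hK (ha s hs y) (hb s hs y))
      (fun y => (h0 y).trans (le_add_of_nonneg_right (by positivity)))
      (fun s hs y hy => (hbdd s hs y).trans
        (le_quadraticBarrier_of_lt_abs hε (by positivity) hs.1 hy)) ht
    rw [deriv_quadraticBarrier_space]
    fun_prop
  have hlim : Tendsto (fun ε => quadraticBarrier m ε K t x) (nhdsWithin 0 (Ioi 0)) (nhds m) := by
    have hcont : Continuous fun ε => quadraticBarrier m ε K t x := by
      unfold quadraticBarrier
      fun_prop
    simpa [quadraticBarrier] using (hcont.tendsto 0).mono_left nhdsWithin_le_nhds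
  exact ge_of_tendsto hlim (eventually_mem_nhdsWithin.mono hbarrier)

/-- `G` solves the linear parabolic equation `∂ₜG = a ∂ₓ²G + b ∂ₓG` on `[0,T] × ℝ`. No regularity
is part of the notion. -/
def SolvesParabolic (a b : ℝ → ℝ → ℝ) (T : ℝ) (G : ℝ → ℝ → ℝ) : Prop :=
  ∀ t ∈ Icc 0 T, ∀ x, deriv (fun s => G s x) t
    = a t x * deriv (deriv (G t)) x + b t x * deriv (G t) x

theorem solvesParabolic_neg (hG : SolvesParabolic a b T G) :
    SolvesParabolic a b T fun t x => -G t x := by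
  intro t ht x
  have hspace : deriv (fun y => -G t y) = fun y => -deriv (G t) y := deriv.fun_neg'
  rw [hspace, deriv.fun_neg, deriv.fun_neg, hG t ht x]
  ring

theorem abs_le_of_solvesParabolic {A B m : ℝ} (hG : Differentiable ℝ (uncurry G))
    (hGx : ∀ t ∈ Ioc 0 T, Differentiable ℝ (deriv (G t)))
    (hbdd : ∀ t ∈ Icc 0 T, ∀ x, |G t x| ≤ B) (ha₀ : ∀ t ∈ Ioc 0 T, ∀ x, 0 ≤ a t x)
    (ha : ∀ t ∈ Ioc 0 T, ∀ x, a t x ≤ A * (1 + x ^ 2))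
    (hb : ∀ t ∈ Ioc 0 T, ∀ x, b t x * x ≤ A * (1 + x ^ 2)) (hsol : SolvesParabolic a b T G)
    (h0 : ∀ x, |G 0 x| ≤ m) (ht : t ∈ Icc 0 T) : |G t x| ≤ m := by
  have hneg_deriv (s : ℝ) : deriv (fun y => -G s y) = fun y => -deriv (G s) y := deriv.fun_neg'
  refine abs_le'.2 ⟨?_, ?_⟩
  · exact le_of_parabolic_subsolution hG hGx (fun s hs y => (le_abs_self _).trans (hbdd s hs y))
      ha₀ ha hb (fun s hs y => (hsol s (Ioc_subset_Icc_self hs) y).le)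
      (fun y => (le_abs_self _).trans (h0 y)) ht
  · exact le_of_parabolic_subsolution (G := fun t x => -G t x) hG.neg
      (fun s hs => by simpa only [hneg_deriv] using (hGx s hs).fun_neg)
      (fun s hs y => (neg_le_abs _).trans (hbdd s hs y)) ha₀ ha hb
      (fun s hs y => (solvesParabolic_neg hsol s (Ioc_subset_Icc_self hs) y).le)
      (fun y => (neg_le_abs _).trans (h0 y)) ht

end MaximumPrinciple

section Sobolev

variable {g : ℝ → ℝ}

theorem sq_le_integral_sq_add_integral_deriv_sq (hg : Differentiable ℝ g)
    (hg2 : Integrable fun x => g x ^ 2) (hdg2 : Integrable fun x => deriv g x ^ 2) (x : ℝ) :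
    g x ^ 2 ≤ (∫ y, g y ^ 2) + ∫ y, deriv g y ^ 2 := by
  have hderiv (y : ℝ) : HasDerivAt (fun z => g z ^ 2) (2 * g y * deriv g y) y := by
    simpa using (hg y).hasDerivAt.fun_pow 2
  have hsum : Integrable fun y => g y ^ 2 + deriv g y ^ 2 := hg2.add hdg2
  have hyoung (y : ℝ) : |2 * g y * deriv g y| ≤ g y ^ 2 + deriv g y ^ 2 :=
    abs_le.2 ⟨by linarith [sq_nonneg (g y + deriv g y)], two_mul_le_add_sq _ _⟩
  have hprod : Integrable fun y => 2 * g y * deriv g y :=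
    hsum.mono'
      ((hg.continuous.measurable.const_mul 2).mul (measurable_deriv g)).aestronglyMeasurable
      (Eventually.of_forall hyoung)
  have hlim : Tendsto (fun y => g y ^ 2) atBot (nhds 0) :=
    tendsto_zero_of_hasDerivAt_of_integrableOn_Iic (a := x) (fun y _ => hderiv y)
      hprod.integrableOn hg2.integrableOn
  have hftc : ∫ y in Iic x, 2 * g y * deriv g y = g x ^ 2 := by
    simpa using integral_Iic_of_hasDerivAt_of_tendsto' (fun y _ => hderiv y) hprod.integrableOn hlim
  calc g x ^ 2 = ∫ y in Iic x, 2 * g y * deriv g y := hftc.symm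
    _ ≤ ∫ y in Iic x, (g y ^ 2 + deriv g y ^ 2) :=
      integral_mono hprod.integrableOn hsum.integrableOn fun y => two_mul_le_add_sq _ _
    _ ≤ ∫ y, (g y ^ 2 + deriv g y ^ 2) :=
      setIntegral_le_integral hsum (Eventually.of_forall fun y => by positivity)
    _ = (∫ y, g y ^ 2) + ∫ y, deriv g y ^ 2 := integral_add hg2 hdg2

theorem L2norm_nonneg (g : ℝ → ℝ) : 0 ≤ L2norm g :=
  Real.rpow_nonneg (integral_nonneg fun _ => sq_nonneg _) _

theorem L2norm_sq (g : ℝ → ℝ) : L2norm g ^ 2 = ∫ x, g x ^ 2 := by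
  rw [L2norm, ← Real.sqrt_eq_rpow, Real.sq_sqrt (integral_nonneg fun _ => sq_nonneg _)]

theorem abs_le_L2norm_add_L2norm_deriv (hg : Differentiable ℝ g)
    (hg2 : Integrable fun x => g x ^ 2) (hdg2 : Integrable fun x => deriv g x ^ 2) (x : ℝ) :
    |g x| ≤ L2norm g + L2norm (deriv g) := by
  have hg0 := L2norm_nonneg g
  have hdg0 := L2norm_nonneg (deriv g)
  refine abs_le_of_sq_le_sq ?_ (by positivity)
  calc g x ^ 2 ≤ L2norm g ^ 2 + L2norm (deriv g) ^ 2 := by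
        rw [L2norm_sq, L2norm_sq]
        exact sq_le_integral_sq_add_integral_deriv_sq hg hg2 hdg2 x
    _ ≤ (L2norm g + L2norm (deriv g)) ^ 2 := by
        rw [add_sq]
        linarith [mul_nonneg hg0 hdg0]

theorem abs_le_and_abs_deriv_le_of_norms_le {M : ℝ} (hg : ContDiff ℝ 2 g)
    (hbdd : BddAbove (range fun x => |g x|)) (hdg2 : Integrable fun x => deriv g x ^ 2)
    (hddg2 : Integrable fun x => deriv (deriv g) x ^ 2)
    (hM : L2norm g + L2norm (deriv g) + L2norm (deriv (deriv g)) + (⨆ x, |g x|) ≤ M) (x : ℝ) :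
    |g x| ≤ M ∧ |deriv g x| ≤ M := by
  have hsup : |g x| ≤ ⨆ x, |g x| := le_ciSup hbdd x
  have hsobolev := abs_le_L2norm_add_L2norm_deriv hg.differentiable_deriv_two hdg2 hddg2 x
  have hg0 := L2norm_nonneg g
  have hdg0 := L2norm_nonneg (deriv g)
  have hddg0 := L2norm_nonneg (deriv (deriv g))
  have habs := abs_nonneg (g x)
  constructor <;> linarith

end Sobolev

section Viscosity

variable {α β σ : ℝ → ℝ}

/-- A `C¹` viscosity function `σ` vanishing at `0` whose derivative lies between the profiles `α`
and `β`. -/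
structure IsViscosityBetween (α β σ : ℝ → ℝ) : Prop where
  contDiff : ContDiff ℝ 1 σ
  map_zero : σ 0 = 0
  le_deriv : ∀ v, α v ≤ deriv σ v
  deriv_le : ∀ v, deriv σ v ≤ β v

namespace IsViscosityBetween

theorem differentiable (hσ : IsViscosityBetween α β σ) : Differentiable ℝ σ :=
  hσ.contDiff.differentiable one_ne_zero

theorem deriv_nonneg (hσ : IsViscosityBetween α β σ) (hα₀ : ∀ v, 0 ≤ α v) (v : ℝ) :
    0 ≤ deriv σ v :=
  (hα₀ v).trans (hσ.le_deriv v)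

theorem abs_integral_le_abs (hσ : IsViscosityBetween α β σ) (hα : Continuous α)
    (hα₀ : ∀ v, 0 ≤ α v) (v : ℝ) : |∫ s in (0 : ℝ)..v, α s| ≤ |σ v| := by
  simpa [hσ.map_zero] using abs_sub_le_abs_sub_of_deriv_le
    (differentiable_integral_of_continuous (a := 0) hα) hσ.differentiable
    (fun w => by simpa [hα.deriv_integral] using hα₀ w)
    (fun w => by simpa [hα.deriv_integral] using hσ.le_deriv w) 0 v

theorem abs_le_abs_integral (hσ : IsViscosityBetween α β σ) (hβ : Continuous β)
    (hα₀ : ∀ v, 0 ≤ α v) (v : ℝ) : |σ v| ≤ |∫ s in (0 : ℝ)..v, β s| := by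
  simpa [hσ.map_zero] using abs_sub_le_abs_sub_of_deriv_le hσ.differentiable
    (differentiable_integral_of_continuous (a := 0) hβ) (hσ.deriv_nonneg hα₀)
    (fun w => by simpa [hβ.deriv_integral] using hσ.deriv_le w) 0 v

theorem exists_forall_abs_le (hα₀ : ∀ v, 0 ≤ α v) (hβ : Continuous β) (R : ℝ) :
    ∃ K, ∀ σ, IsViscosityBetween α β σ → ∀ v, |v| ≤ R → |σ v| ≤ K := by
  obtain ⟨K, hK⟩ := exists_forall_abs_le_of_continuous
    (differentiable_integral_of_continuous (a := 0) hβ).continuous R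
  exact ⟨K, fun σ hσ v hv => (hσ.abs_le_abs_integral hβ hα₀ v).trans (hK v hv)⟩

theorem exists_forall_abs_le_of_abs_le (hα : Continuous α) (hα₀ : ∀ v, 0 ≤ α v)
    (hcoercive : Tendsto (fun v => |∫ s in (0 : ℝ)..v, α s|) (Bornology.cobounded ℝ) atTop)
    (m : ℝ) : ∃ R, ∀ σ, IsViscosityBetween α β σ → ∀ v, |σ v| ≤ m → |v| ≤ R := by
  obtain ⟨R, -, hR⟩ :=
    hasBasis_cobounded_norm.eventually_iff.1 (hcoercive.eventually_gt_atTop m)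
  refine ⟨R, fun σ hσ v hv => ?_⟩
  by_contra! hlt
  exact (hR (show v ∈ {w : ℝ | R ≤ ‖w‖} from hlt.le)).not_ge
    ((hσ.abs_integral_le_abs hα hα₀ v).trans hv)

end IsViscosityBetween

/-- The pseudo-plastic viscosity profile `c (1 + v²)^((p-1)/2)`. -/
noncomputable def powerLawViscosity (c p v : ℝ) : ℝ := c * (1 + v ^ 2) ^ ((p - 1) / 2)

variable {c p : ℝ}

theorem continuous_powerLawViscosity (c p : ℝ) : Continuous (powerLawViscosity c p) :=
  continuous_const.mul <| (by fun_prop : Continuous fun v : ℝ => 1 + v ^ 2).rpow_const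
    fun v => Or.inl (by positivity)

theorem powerLawViscosity_nonneg (hc : 0 ≤ c) (p v : ℝ) : 0 ≤ powerLawViscosity c p v := by
  unfold powerLawViscosity
  positivity

theorem mul_inv_sqrt_le_powerLawViscosity (hc : 0 ≤ c) (hp : 0 ≤ p) (v : ℝ) :
    c * (√(1 + v ^ 2))⁻¹ ≤ powerLawViscosity c p v := by
  rw [powerLawViscosity, Real.sqrt_eq_rpow, ← Real.rpow_neg (by positivity)]
  gcongr
  · exact le_add_of_nonneg_right (sq_nonneg v)
  · linarith

theorem tendsto_abs_arsinh_cobounded :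
    Tendsto (fun v => |Real.arsinh v|) (Bornology.cobounded ℝ) atTop := by
  rw [Metric.cobounded_eq_cocompact]
  exact tendsto_norm_cocompact_atTop.comp
    Real.sinhHomeomorph.symm.isClosedEmbedding.tendsto_cocompact

theorem tendsto_abs_integral_powerLawViscosity (hc : 0 < c) (hp : 0 ≤ p) :
    Tendsto (fun v => |∫ s in (0 : ℝ)..v, powerLawViscosity c p s|)
      (Bornology.cobounded ℝ) atTop := by
  have hcont := continuous_powerLawViscosity c p
  have hderiv (v : ℝ) : deriv (fun w => c * Real.arsinh w) v = c * (√(1 + v ^ 2))⁻¹ :=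
    ((Real.hasDerivAt_arsinh v).const_mul c).deriv
  refine tendsto_atTop_mono (fun v => ?_) (tendsto_abs_arsinh_cobounded.const_mul_atTop hc)
  have hcompare := abs_sub_le_abs_sub_of_deriv_le (Real.differentiable_arsinh.const_mul c)
    (differentiable_integral_of_continuous (a := 0) hcont) (fun w => by rw [hderiv]; positivity)
    (fun w => by
      rw [hderiv, hcont.deriv_integral]
      exact mul_inv_sqrt_le_powerLawViscosity hc.le hp w) 0 v
  simpa [abs_mul, abs_of_pos hc] using hcompare

end Viscosity

section ViscousConservationLaw

open Function

variable {f σ α β : ℝ → ℝ} {T : ℝ} {u G : ℝ → ℝ → ℝ}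

/-- The flux `F = σ(∂ₓu) - f(u)` of the viscous conservation law `∂ₜu + ∂ₓf(u) = ∂ₓσ(∂ₓu)`. -/
noncomputable def viscousFlux (f σ : ℝ → ℝ) (u : ℝ → ℝ → ℝ) (t x : ℝ) : ℝ :=
  σ (deriv (u t) x) - f (u t x)

theorem differentiable_uncurry_viscousFlux (hf : Differentiable ℝ f) (hσ : Differentiable ℝ σ)
    (hu : ContDiff ℝ 2 (uncurry u)) : Differentiable ℝ (uncurry (viscousFlux f σ u)) :=
  (hσ.comp ((contDiff_uncurry_deriv_snd hu one_add_one_eq_two.le).differentiable one_ne_zero)).sub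
    (hf.comp (hu.differentiable two_ne_zero))

theorem deriv_viscousFlux_space (hf : Differentiable ℝ f) (hσ : Differentiable ℝ σ)
    (hu : ContDiff ℝ 2 (uncurry u)) (t x : ℝ) :
    deriv (viscousFlux f σ u t) x =
      deriv σ (deriv (u t) x) * deriv (deriv (u t)) x - deriv f (u t x) * deriv (u t) x := by
  have hux := (contDiff_uncurry_deriv_snd hu one_add_one_eq_two.le).differentiable one_ne_zero
  have hu_snd := differentiable_snd_of_differentiable_uncurry (hu.differentiable two_ne_zero) t x
  have hux_snd := differentiable_snd_of_differentiable_uncurry hux t x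
  exact (((hσ _).hasDerivAt.comp x hux_snd.hasDerivAt).sub
    ((hf _).hasDerivAt.comp x hu_snd.hasDerivAt)).deriv

theorem deriv_viscousFlux_time (hf : Differentiable ℝ f) (hσ : Differentiable ℝ σ)
    (hu : ContDiff ℝ 2 (uncurry u)) (t x : ℝ) :
    deriv (fun s => viscousFlux f σ u s x) t =
      deriv σ (deriv (u t) x) * deriv (fun s => deriv (u s) x) t
        - deriv f (u t x) * deriv (fun s => u s x) t := by
  have hux := (contDiff_uncurry_deriv_snd hu one_add_one_eq_two.le).differentiable one_ne_zero
  have hu_fst := differentiable_fst_of_differentiable_uncurry (hu.differentiable two_ne_zero) x t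
  have hux_fst := differentiable_fst_of_differentiable_uncurry hux x t
  exact (((hσ _).hasDerivAt.comp t hux_fst.hasDerivAt).sub
    ((hf _).hasDerivAt.comp t hu_fst.hasDerivAt)).deriv

/-- `u` is a `C²` solution of `∂ₜu + ∂ₓf(u) = ∂ₓσ(∂ₓu)` on `[0,T] × ℝ`, bounded together with its
gradient. The equation is written as `∂ₜu = ∂ₓF` with `F` the viscous flux. -/
structure IsBoundedViscousSolution (f σ : ℝ → ℝ) (T : ℝ) (u : ℝ → ℝ → ℝ) : Prop where
  contDiff : ContDiff ℝ 2 (uncurry u)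
  exists_bound : ∃ B, ∀ t ∈ Icc 0 T, ∀ x, |u t x| ≤ B ∧ |deriv (u t) x| ≤ B
  deriv_time : ∀ t ∈ Icc 0 T, ∀ x, deriv (fun s => u s x) t = deriv (viscousFlux f σ u t) x

/-- `G` solves `∂ₜG = σ'(∂ₓu) ∂ₓ²G - f'(u) ∂ₓG`, the equation `∂ₜu + ∂ₓf(u) = ∂ₓσ(∂ₓu)` in
nondivergence form with coefficients evaluated along `u`. -/
def SolvesLinearized (f σ : ℝ → ℝ) (T : ℝ) (u G : ℝ → ℝ → ℝ) : Prop :=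
  SolvesParabolic (fun t x => deriv σ (deriv (u t) x)) (fun t x => -deriv f (u t x)) T G

namespace IsBoundedViscousSolution

theorem solvesLinearized (hf : Differentiable ℝ f) (hσ : Differentiable ℝ σ)
    (hu : IsBoundedViscousSolution f σ T u) : SolvesLinearized f σ T u u := by
  intro t ht x
  rw [hu.deriv_time t ht x, deriv_viscousFlux_space hf hσ hu.contDiff]
  ring

theorem deriv_viscousFlux (hu : IsBoundedViscousSolution f σ T u) {t : ℝ} (ht : t ∈ Icc 0 T) :
    deriv (viscousFlux f σ u t) = fun x => deriv (fun s => u s x) t :=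
  funext fun x => (hu.deriv_time t ht x).symm

theorem differentiable_deriv_viscousFlux (hu : IsBoundedViscousSolution f σ T u) {t : ℝ}
    (ht : t ∈ Icc 0 T) : Differentiable ℝ (deriv (viscousFlux f σ u t)) := by
  rw [hu.deriv_viscousFlux ht]
  have hut := contDiff_uncurry_deriv_fst hu.contDiff one_add_one_eq_two.le
  exact differentiable_snd_of_differentiable_uncurry (hut.differentiable one_ne_zero) t

theorem solvesLinearized_viscousFlux (hf : Differentiable ℝ f) (hσ : Differentiable ℝ σ)
    (hu : IsBoundedViscousSolution f σ T u) : SolvesLinearized f σ T u (viscousFlux f σ u) := by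
  intro t ht x
  rw [deriv_viscousFlux_time hf hσ hu.contDiff, deriv_fst_deriv_snd_comm hu.contDiff,
    hu.deriv_viscousFlux ht]
  ring

theorem exists_coefficient_bound (hf : ContDiff ℝ 1 f) (hσ : ContDiff ℝ 1 σ)
    (hu : IsBoundedViscousSolution f σ T u) :
    ∃ A, ∀ t ∈ Icc 0 T, ∀ x, deriv σ (deriv (u t) x) ≤ A * (1 + x ^ 2) ∧
      -deriv f (u t x) * x ≤ A * (1 + x ^ 2) := by
  obtain ⟨B, hB⟩ := hu.exists_bound
  obtain ⟨Kf, hKf⟩ := exists_forall_abs_le_of_continuous hf.continuous_deriv_one B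
  obtain ⟨Kσ, hKσ⟩ := exists_forall_abs_le_of_continuous hσ.continuous_deriv_one B
  refine ⟨max Kf Kσ, fun t ht x => ?_⟩
  obtain ⟨hut, huxt⟩ := hB t ht x
  have hf' : |deriv f (u t x)| ≤ max Kf Kσ := (hKf _ hut).trans (le_max_left _ _)
  have hσ' : |deriv σ (deriv (u t) x)| ≤ max Kf Kσ := (hKσ _ huxt).trans (le_max_right _ _)
  have hnonneg : 0 ≤ max Kf Kσ := (abs_nonneg _).trans hf'
  have hx : |x| ≤ 1 + x ^ 2 := by
    rw [← sq_abs]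
    nlinarith
  constructor
  · calc deriv σ (deriv (u t) x) ≤ max Kf Kσ * 1 := by simpa using (le_abs_self _).trans hσ'
      _ ≤ max Kf Kσ * (1 + x ^ 2) := by
        gcongr
        exact le_add_of_nonneg_right (sq_nonneg x)
  · calc -deriv f (u t x) * x ≤ |deriv f (u t x)| * |x| := by
          rw [← abs_neg, ← abs_mul]
          exact le_abs_self _
      _ ≤ max Kf Kσ * (1 + x ^ 2) := by gcongr

theorem abs_le_of_solvesLinearized {B m : ℝ} (hf : ContDiff ℝ 1 f) (hσ : ContDiff ℝ 1 σ)
    (hσ₀ : ∀ v, 0 ≤ deriv σ v) (hu : IsBoundedViscousSolution f σ T u)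
    (hG : Differentiable ℝ (uncurry G)) (hGx : ∀ t ∈ Icc 0 T, Differentiable ℝ (deriv (G t)))
    (hbdd : ∀ t ∈ Icc 0 T, ∀ x, |G t x| ≤ B) (hsol : SolvesLinearized f σ T u G)
    (h0 : ∀ x, |G 0 x| ≤ m) {t : ℝ} (ht : t ∈ Icc 0 T) (x : ℝ) : |G t x| ≤ m := by
  obtain ⟨A, hA⟩ := hu.exists_coefficient_bound hf hσ
  exact abs_le_of_solvesParabolic hG (fun s hs => hGx s (Ioc_subset_Icc_self hs)) hbdd
    (fun s _ y => hσ₀ _) (fun s hs y => (hA s (Ioc_subset_Icc_self hs) y).1)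
    (fun s hs y => (hA s (Ioc_subset_Icc_self hs) y).2) hsol h0 ht

theorem abs_le {m : ℝ} (hf : ContDiff ℝ 1 f) (hσ : ContDiff ℝ 1 σ) (hσ₀ : ∀ v, 0 ≤ deriv σ v)
    (hu : IsBoundedViscousSolution f σ T u) (h0 : ∀ x, |u 0 x| ≤ m) {t : ℝ} (ht : t ∈ Icc 0 T)
    (x : ℝ) : |u t x| ≤ m := by
  obtain ⟨B, hB⟩ := hu.exists_bound
  have hux := contDiff_uncurry_deriv_snd hu.contDiff one_add_one_eq_two.le
  exact hu.abs_le_of_solvesLinearized hf hσ hσ₀ (hu.contDiff.differentiable two_ne_zero)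
    (fun s _ => differentiable_snd_of_differentiable_uncurry (hux.differentiable one_ne_zero) s)
    (fun s hs y => (hB s hs y).1)
    (hu.solvesLinearized (hf.differentiable one_ne_zero) (hσ.differentiable one_ne_zero)) h0 ht x

theorem abs_viscousFlux_le {m : ℝ} (hf : ContDiff ℝ 1 f) (hσ : ContDiff ℝ 1 σ)
    (hσ₀ : ∀ v, 0 ≤ deriv σ v) (hu : IsBoundedViscousSolution f σ T u)
    (h0 : ∀ x, |viscousFlux f σ u 0 x| ≤ m) {t : ℝ} (ht : t ∈ Icc 0 T) (x : ℝ) :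
    |viscousFlux f σ u t x| ≤ m := by
  have hfd := hf.differentiable one_ne_zero
  have hσd := hσ.differentiable one_ne_zero
  obtain ⟨B, hB⟩ := hu.exists_bound
  obtain ⟨Kf, hKf⟩ := exists_forall_abs_le_of_continuous hf.continuous B
  obtain ⟨Kσ, hKσ⟩ := exists_forall_abs_le_of_continuous hσ.continuous B
  exact hu.abs_le_of_solvesLinearized hf hσ hσ₀
    (differentiable_uncurry_viscousFlux hfd hσd hu.contDiff)
    (fun s hs => hu.differentiable_deriv_viscousFlux hs)
    (fun s hs y => (abs_sub _ _).trans (add_le_add (hKσ _ (hB s hs y).2) (hKf _ (hB s hs y).1)))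
    (hu.solvesLinearized_viscousFlux hfd hσd) h0 ht x

end IsBoundedViscousSolution

theorem exists_gradient_bound_of_coercive (hf : ContDiff ℝ 1 f) (hα : Continuous α)
    (hα₀ : ∀ v, 0 ≤ α v) (hβ : Continuous β)
    (hcoercive : Tendsto (fun v => |∫ s in (0 : ℝ)..v, α s|) (Bornology.cobounded ℝ) atTop)
    (A D : ℝ) :
    ∃ C, ∀ σ, IsViscosityBetween α β σ → ∀ T u, IsBoundedViscousSolution f σ T u →
      (∀ x, |u 0 x| ≤ A) → (∀ x, |deriv (u 0) x| ≤ D) →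
      ∀ t ∈ Icc 0 T, ∀ x, |deriv (u t) x| ≤ C := by
  obtain ⟨Kf, hKf⟩ := exists_forall_abs_le_of_continuous hf.continuous A
  obtain ⟨Kσ, hKσ⟩ := IsViscosityBetween.exists_forall_abs_le hα₀ hβ D
  obtain ⟨C, hC⟩ :=
    IsViscosityBetween.exists_forall_abs_le_of_abs_le (β := β) hα hα₀ hcoercive (Kσ + Kf + Kf)
  refine ⟨C, fun σ hσ T u hu hu0 hux0 t ht x => hC σ hσ _ ?_⟩
  have hσ₀ := hσ.deriv_nonneg hα₀
  have hflux : |viscousFlux f σ u t x| ≤ Kσ + Kf :=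
    hu.abs_viscousFlux_le hf hσ.contDiff hσ₀
      (fun y => (abs_sub _ _).trans (add_le_add (hKσ σ hσ _ (hux0 y)) (hKf _ (hu0 y)))) ht x
  have hfu : |f (u t x)| ≤ Kf := hKf _ (hu.abs_le hf hσ.contDiff hσ₀ hu0 ht x)
  calc |σ (deriv (u t) x)| = |viscousFlux f σ u t x + f (u t x)| := by simp [viscousFlux]
    _ ≤ Kσ + Kf + Kf := (abs_add_le _ _).trans (add_le_add hflux hfu)

end ViscousConservationLaw

section Perturbation

open Function

variable {f σ α β : ℝ → ℝ} {T : ℝ} {U φ : ℝ → ℝ → ℝ}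

/-- `U` solves the inviscid conservation law `∂ₜU + ∂ₓf(U) = 0` on `[0,T] × ℝ`. -/
def IsInviscidSolution (f : ℝ → ℝ) (T : ℝ) (U : ℝ → ℝ → ℝ) : Prop :=
  ∀ t ∈ Icc 0 T, ∀ x, deriv (fun s => U s x) t + deriv (fun y => f (U t y)) x = 0

/-- `φ` solves on `[0,T] × ℝ` the equation for perturbations of `U`, obtained by subtracting the
inviscid law for `U` from the viscous law for `U + φ`; the viscous term of `U` is a source. -/
def IsPerturbation (f σ : ℝ → ℝ) (T : ℝ) (U φ : ℝ → ℝ → ℝ) : Prop :=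
  ∀ t ∈ Icc 0 T, ∀ x,
    deriv (fun s => φ s x) t
        + deriv (fun y => f (U t y + φ t y) - f (U t y)) x
        - deriv (fun y => σ (deriv (U t) y + deriv (φ t) y) - σ (deriv (U t) y)) x
      = deriv (fun y => σ (deriv (U t) y)) x

theorem deriv_add_snd (hU : Differentiable ℝ (uncurry U)) (hφ : Differentiable ℝ (uncurry φ))
    (t : ℝ) :
    deriv (fun x => U t x + φ t x) = fun x => deriv (U t) x + deriv (φ t) x :=
  funext fun x => deriv_fun_add (differentiable_snd_of_differentiable_uncurry hU t x)
    (differentiable_snd_of_differentiable_uncurry hφ t x)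

theorem IsPerturbation.deriv_time_add (hf : Differentiable ℝ f) (hσ : Differentiable ℝ σ)
    (hUC : ContDiff ℝ 2 (uncurry U)) (hφC : ContDiff ℝ 2 (uncurry φ))
    (hU : IsInviscidSolution f T U) (hφ : IsPerturbation f σ T U φ) {t : ℝ} (ht : t ∈ Icc 0 T)
    (x : ℝ) :
    deriv (fun s => U s x + φ s x) t = deriv (viscousFlux f σ (fun t x => U t x + φ t x) t) x := by
  have hUd := hUC.differentiable two_ne_zero
  have hφd := hφC.differentiable two_ne_zero
  have hUx := differentiable_snd_of_differentiable_uncurry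
    ((contDiff_uncurry_deriv_snd hUC one_add_one_eq_two.le).differentiable one_ne_zero) t
  have hφx := differentiable_snd_of_differentiable_uncurry
    ((contDiff_uncurry_deriv_snd hφC one_add_one_eq_two.le).differentiable one_ne_zero) t
  have hU_snd := differentiable_snd_of_differentiable_uncurry hUd t
  have hφ_snd := differentiable_snd_of_differentiable_uncurry hφd t
  have hfU := hf.fun_comp hU_snd
  have hfu := hf.fun_comp (hU_snd.fun_add hφ_snd)
  have hσU := hσ.fun_comp hUx
  have hσu := hσ.fun_comp (hUx.fun_add hφx)
  have hinviscid := hU t ht x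
  have hperturbation := hφ t ht x
  rw [deriv_fun_sub (hfu x) (hfU x), deriv_fun_sub (hσu x) (hσU x)] at hperturbation
  change _ = deriv (fun y => σ (deriv (fun x => U t x + φ t x) y) - f (U t y + φ t y)) x
  rw [deriv_add_snd hUd hφd, deriv_fun_sub (hσu x) (hfu x),
    deriv_fun_add (differentiable_fst_of_differentiable_uncurry hUd x t)
      (differentiable_fst_of_differentiable_uncurry hφd x t)]
  linarith

theorem IsPerturbation.isBoundedViscousSolution_add {A L : ℝ} (hf : Differentiable ℝ f)
    (hσ : Differentiable ℝ σ) (hUC : ContDiff ℝ 2 (uncurry U)) (hφC : ContDiff ℝ 2 (uncurry φ))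
    (hU : IsInviscidSolution f T U) (hφ : IsPerturbation f σ T U φ)
    (hUA : ∀ t ∈ Icc 0 T, ∀ x, |U t x| ≤ A) (hUL : ∀ t ∈ Icc 0 T, ∀ x, |deriv (U t) x| ≤ L)
    (hφB : ∃ B, ∀ t ∈ Icc 0 T, ∀ x, |φ t x| + |deriv (φ t) x| ≤ B) :
    IsBoundedViscousSolution f σ T fun t x => U t x + φ t x where
  contDiff := hUC.add hφC
  exists_bound := by
    obtain ⟨B, hB⟩ := hφB
    refine ⟨max A L + B, fun t ht x => ?_⟩
    have hφ0 := abs_nonneg (φ t x)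
    have hφx0 := abs_nonneg (deriv (φ t) x)
    have hφt := hB t ht x
    rw [deriv_add_snd (hUC.differentiable two_ne_zero) (hφC.differentiable two_ne_zero)]
    exact ⟨(abs_add_le _ _).trans
        (add_le_add ((hUA t ht x).trans (le_max_left _ _)) (by linarith)),
      (abs_add_le _ _).trans
        (add_le_add ((hUL t ht x).trans (le_max_right _ _)) (by linarith))⟩
  deriv_time := fun _ ht x => hφ.deriv_time_add hf hσ hUC hφC hU ht x

theorem uniform_bound_on_derivative_general (hf : ContDiff ℝ 1 f) (hα : Continuous α)
    (hα₀ : ∀ v, 0 ≤ α v) (hβ : Continuous β)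
    (hcoercive : Tendsto (fun v => |∫ s in (0 : ℝ)..v, α s|) (Bornology.cobounded ℝ) atTop)
    (A L M D : ℝ) :
    ∃ C₀, 0 < C₀ ∧ ∀ σ, IsViscosityBetween α β σ → ∀ T U φ,
      ContDiff ℝ 2 (uncurry U) → ContDiff ℝ 2 (uncurry φ) →
      IsInviscidSolution f T U → IsPerturbation f σ T U φ →
      (∀ t ∈ Icc 0 T, ∀ x, |U t x| ≤ A) → (∀ t ∈ Icc 0 T, ∀ x, |deriv (U t) x| ≤ L) →
      (∃ B, ∀ t ∈ Icc 0 T, ∀ x, |φ t x| + |deriv (φ t) x| ≤ B) →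
      (∀ x, |φ 0 x| ≤ M) → (∀ x, |deriv (φ 0) x| ≤ D) →
      ∀ t ∈ Icc 0 T, ∀ x, |deriv (φ t) x| ≤ C₀ := by
  obtain ⟨C, hC⟩ := exists_gradient_bound_of_coercive hf hα hα₀ hβ hcoercive (A + M) (L + D)
  refine ⟨max 1 (C + L), by positivity, ?_⟩
  intro σ hσ T U φ hUC hφC hU hφ hUA hUL hφB hφ0 hφx0 t ht x
  have hderiv := deriv_add_snd (hUC.differentiable two_ne_zero) (hφC.differentiable two_ne_zero)
  have h0 : (0 : ℝ) ∈ Icc 0 T := ⟨le_rfl, ht.1.trans ht.2⟩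
  have hux : |deriv (U t) x + deriv (φ t) x| ≤ C := by
    have hu := hφ.isBoundedViscousSolution_add (hf.differentiable one_ne_zero) hσ.differentiable
      hUC hφC hU hUA hUL hφB
    have hbound := hC σ hσ T _ hu
      (fun y => (abs_add_le _ _).trans (add_le_add (hUA 0 h0 y) (hφ0 y)))
      (fun y => by
        rw [hderiv]
        exact (abs_add_le _ _).trans (add_le_add (hUL 0 h0 y) (hφx0 y))) t ht x
    rwa [hderiv] at hbound
  calc |deriv (φ t) x| = |deriv (U t) x + deriv (φ t) x - deriv (U t) x| := by
        rw [add_sub_cancel_left]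
    _ ≤ C + L := (abs_sub _ _).trans (add_le_add hux (hUL t ht x))
    _ ≤ max 1 (C + L) := le_max_right _ _

end Perturbation

/-- Lemma 6.1 (uniform bound on `∂ₓφ` via the Kanel'-type argument, requiring
`3/7 < p < 1`): if `‖φ(0)‖_{L²} + ‖∂ₓφ(0)‖_{L²} + ‖∂ₓ²φ(0)‖_{L²} + sup|φ(0)| ≤ M` then
`|∂ₓφ(t,x)| ≤ C₀` on `[0,T]×ℝ`, with `C₀` depending only on
`p, c₁, c₂, CU, um, up, f, M` (not on `T`). -/
theorem uniform_bound_on_derivative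
    (p c₁ c₂ : ℝ) (hp0 : 0 < p) (hp1 : p < 1) (hp37 : 3 / 7 < p) (hc1 : 0 < c₁) (hc12 : c₁ ≤ c₂)
    (f : ℝ → ℝ) (hf : ContDiff ℝ (⊤ : ℕ∞) f) (hconv : ∀ u : ℝ, 0 < deriv (deriv f) u)
    (um up CU : ℝ) (hu : um < up) (hCU : 0 < CU)
    (M : ℝ) (hM : 0 < M) :
    ∃ C₀ : ℝ, 0 < C₀ ∧
      ∀ σ : ℝ → ℝ, ContDiff ℝ (⊤ : ℕ∞) σ → σ 0 = 0 →
      (∀ v : ℝ, c₁ * (1 + v ^ 2) ^ ((p - 1) / 2) ≤ deriv σ v ∧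
        deriv σ v ≤ c₂ * (1 + v ^ 2) ^ ((p - 1) / 2)) →
      ∀ U : ℝ → ℝ → ℝ, ContDiff ℝ (⊤ : ℕ∞) (fun q : ℝ × ℝ => U q.1 q.2) →
      (∀ t : ℝ, 0 ≤ t → ∀ x : ℝ,
        deriv (fun s => U s x) t + deriv (fun y => f (U t y)) x = 0) →
      (∀ t : ℝ, 0 ≤ t → ∀ x : ℝ, um < U t x ∧ U t x < up) →
      (∀ t : ℝ, 0 ≤ t → ∀ x : ℝ, 0 < deriv (U t) x) →
      (∀ t : ℝ, 0 ≤ t → ∀ x : ℝ, deriv (U t) x ≤ CU * (1 + t)⁻¹) →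
      (∀ t : ℝ, 0 ≤ t → L2norm (deriv (U t)) ≤ CU * (1 + t) ^ (-(1 : ℝ) / 2)) →
      (∀ t : ℝ, 0 ≤ t → (∫ x : ℝ, |deriv (deriv (U t)) x|) ≤ CU * (1 + t)⁻¹) →
      (∀ t : ℝ, 0 ≤ t → ∀ x : ℝ,
        L2norm (deriv (deriv (U t))) + |deriv (deriv (U t)) x|
          ≤ CU * (1 + t) ^ (-(9 : ℝ) / 8)) →
      (∀ t : ℝ, 0 ≤ t →
        L2norm (deriv (deriv (deriv (U t)))) ≤ CU * (1 + t) ^ (-(9 : ℝ) / 8)) →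
      (∀ t : ℝ, 0 ≤ t → ∀ x : ℝ,
        L2norm (fun y => deriv (fun s => deriv (U s) y) t)
          + |deriv (fun s => deriv (U s) x) t| ≤ CU * (1 + t)⁻¹) →
      ∀ T : ℝ, 0 < T →
      ∀ φ : ℝ → ℝ → ℝ, ContDiff ℝ (⊤ : ℕ∞) (fun q : ℝ × ℝ => φ q.1 q.2) →
      (∀ t ∈ Icc (0 : ℝ) T, ∀ x : ℝ,
        deriv (fun s => φ s x) t
          + deriv (fun y => f (U t y + φ t y) - f (U t y)) x
          - deriv (fun y => σ (deriv (U t) y + deriv (φ t) y) - σ (deriv (U t) y)) x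
        = deriv (fun y => σ (deriv (U t) y)) x) →
      (∃ B : ℝ, ∀ t ∈ Icc (0 : ℝ) T, ∀ x : ℝ,
        |φ t x| + |deriv (φ t) x| + |deriv (deriv (φ t)) x|
          + |deriv (deriv (deriv (φ t))) x| + |deriv (fun s => deriv (φ s) x) t| ≤ B) →
      (∀ t ∈ Icc (0 : ℝ) T,
        Integrable (fun x : ℝ => (φ t x) ^ 2) ∧
        Integrable (fun x : ℝ => (deriv (φ t) x) ^ 2) ∧
        Integrable (fun x : ℝ => (deriv (deriv (φ t)) x) ^ 2) ∧
        Integrable (fun x : ℝ => (deriv (deriv (deriv (φ t))) x) ^ 2) ∧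
        Integrable (fun x : ℝ => (deriv (fun s => deriv (φ s) x) t) ^ 2)) →
      (∃ B : ℝ, ∀ t ∈ Icc (0 : ℝ) T,
        (∫ x : ℝ, (φ t x) ^ 2) + (∫ x : ℝ, (deriv (φ t) x) ^ 2)
          + (∫ x : ℝ, (deriv (deriv (φ t)) x) ^ 2)
          + (∫ x : ℝ, (deriv (deriv (deriv (φ t))) x) ^ 2)
          + (∫ x : ℝ, (deriv (fun s => deriv (φ s) x) t) ^ 2) ≤ B) →
      (∀ t ∈ Icc (0 : ℝ) T,
        Tendsto (φ t) atTop (nhds 0) ∧ Tendsto (φ t) atBot (nhds 0) ∧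
        Tendsto (deriv (φ t)) atTop (nhds 0) ∧ Tendsto (deriv (φ t)) atBot (nhds 0) ∧
        Tendsto (deriv (deriv (φ t))) atTop (nhds 0) ∧
        Tendsto (deriv (deriv (φ t))) atBot (nhds 0)) →
      L2norm (φ 0) + L2norm (deriv (φ 0)) + L2norm (deriv (deriv (φ 0)))
        + (⨆ x : ℝ, |φ 0 x|) ≤ M →
      ∀ t ∈ Icc (0 : ℝ) T, ∀ x : ℝ, |deriv (φ t) x| ≤ C₀ := by
  obtain ⟨C₀, hC₀, hbound⟩ := uniform_bound_on_derivative_general (hf.of_le ENat.LEInfty.out)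
    (continuous_powerLawViscosity c₁ p) (powerLawViscosity_nonneg hc1.le p)
    (continuous_powerLawViscosity c₂ p) (tendsto_abs_integral_powerLawViscosity hc1 hp0.le)
    (max |um| |up|) CU M M
  refine ⟨C₀, hC₀, ?_⟩
  intro σ hσ hσ0 hσ' U hU hUeq hUb hUpos hUx _ _ _ _ _ T hT φ hφ hφeq ⟨B, hB⟩ hint _ _ hinit
  have hUabs : ∀ t ∈ Icc 0 T, ∀ x, |U t x| ≤ max |um| |up| := fun t ht x =>
    abs_le_max_abs_abs (hUb t ht.1 x).1.le (hUb t ht.1 x).2.le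
  have hUxabs : ∀ t ∈ Icc 0 T, ∀ x, |deriv (U t) x| ≤ CU := fun t ht x => by
    rw [abs_of_pos (hUpos t ht.1 x)]
    exact (hUx t ht.1 x).trans
      (mul_le_of_le_one_right hCU.le (inv_le_one_of_one_le₀ (le_add_of_nonneg_right ht.1)))
  have hφabs : ∀ t ∈ Icc 0 T, ∀ x, |φ t x| + |deriv (φ t) x| ≤ B := fun t ht x =>
    le_of_add_le_of_nonneg_left (le_of_add_le_of_nonneg_left (le_of_add_le_of_nonneg_left
      (hB t ht x) (abs_nonneg _)) (abs_nonneg _)) (abs_nonneg _)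
  have h0 : (0 : ℝ) ∈ Icc 0 T := ⟨le_rfl, hT.le⟩
  have hφ2 : ContDiff ℝ 2 (Function.uncurry φ) := hφ.of_le ENat.LEInfty.out
  obtain ⟨-, hφx, hφxx, -, -⟩ := hint 0 h0
  have hφ0 := abs_le_and_abs_deriv_le_of_norms_le (hφ2.comp (contDiff_prodMk_right 0))
    ⟨B, forall_mem_range.2 fun x => (le_add_of_nonneg_right (abs_nonneg _)).trans (hφabs 0 h0 x)⟩
    hφx hφxx hinit
  exact hbound σ ⟨hσ.of_le ENat.LEInfty.out, hσ0, fun v => (hσ' v).1, fun v => (hσ' v).2⟩ T U φ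
    (hU.of_le ENat.LEInfty.out) hφ2 (fun t ht => hUeq t ht.1) hφeq hUabs hUxabs
    ⟨B, hφabs⟩ (fun x => (hφ0 x).1) (fun x => (hφ0 x).2)
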